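/- Let φ : ℝⁿ → ℝ be C^{1,1} with 0 ≤ D²φ ≤ L₃ (in particular |δφ(x,y)| ≤ 2L₃|y|² for all x, y) and Lipschitz with constant L₄. Then for any x ∈ ℝⁿ, e ∈ Sⁿ⁻¹, 0 < h ≤ 1, and σ ∈ (1,2), the integral ∫_{ℝⁿ} |δφ(x + he, y) - δφ(x, y)| / |y|^{n+σ} dy is bounded by C(n,σ) L₄^{(2-σ)/2} L₃^{σ/2} h^{(2-σ)/2}, where δφ(x,y) = φ(x+y)+φ(x-y)-2φ(x). -/

import Mathlib

/-!
Write `Δ y = sd φ (x + h • e) y - sd φ x y`. The second-order bound gives `|Δ y| ≤ 4 L₃ ‖y‖²`, and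
the Lipschitz bound, applied to the increments of `φ` at `x ± y` and `x` in the direction `h • e`,
gives `|Δ y| ≤ 4 L₄ h`. With `R² = L₄ h / L₃`, these combine to
`|Δ y| ≤ 4 L₄ h * min (‖R⁻¹ y‖²) 1`. Hence the integrand is at most
`4 L₄ h R⁻⁽ⁿ⁺σ⁾ k (R⁻¹ y)`, where `k z = min (‖z‖²) 1 / ‖z‖ ^ (n + σ)` is the profile
`scaleKernel`. Since `1 < σ < 2`, polar coordinates show that `k` is integrable (this is where the
ball and its complement are treated separately), and the change of variables `y = R z` bounds the
integral by `4 L₄ h R⁻σ ∫ k`, which has the required form.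
-/


open MeasureTheory

/-- Second-order symmetric difference. -/
noncomputable def sd {n : ℕ} (w : EuclideanSpace ℝ (Fin n) → ℝ)
    (x y : EuclideanSpace ℝ (Fin n)) : ℝ :=
  w (x + y) + w (x - y) - 2 * w x

/-- The radial profile `min (‖z‖²) 1 / ‖z‖ ^ (n + σ)`, the common dominating function after
rescaling the critical radius to `1`. -/
noncomputable def scaleKernel (n : ℕ) (σ : ℝ) (z : EuclideanSpace ℝ (Fin n)) : ℝ :=
  min (‖z‖ ^ 2) 1 / ‖z‖ ^ ((n : ℝ) + σ)

lemma scaleKernel_nonneg (n : ℕ) (σ : ℝ) (z : EuclideanSpace ℝ (Fin n)) :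
    0 ≤ scaleKernel n σ z := by
  unfold scaleKernel; positivity

/-- In polar coordinates the profile has density `r ^ (1 - σ)` on the unit ball, integrable
because `σ < 2`, and `r ^ (-1 - σ)` outside it, integrable because `0 < σ`. -/
lemma integrable_scaleKernel (m : ℕ) (σ : ℝ) (hσ : 1 < σ ∧ σ < 2) :
    Integrable (scaleKernel (m + 1) σ) := by
  have key := integrable_fun_norm_addHaar
    (volume : Measure (EuclideanSpace ℝ (Fin (m + 1))))
    (f := fun r : ℝ => min (r ^ 2) 1 / r ^ (((m + 1 : ℕ) : ℝ) + σ))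
  refine key.2 ?_
  rw [finrank_euclideanSpace_fin, Nat.add_sub_cancel,
    ← Set.Ioc_union_Ioi_eq_Ioi (zero_le_one' ℝ)]
  refine IntegrableOn.union ?_ ?_
  · have h1 : IntegrableOn (fun r : ℝ => r ^ (1 - σ)) (Set.Ioc 0 1) :=
      (intervalIntegrable_iff_integrableOn_Ioc_of_le zero_le_one).1
        (intervalIntegral.intervalIntegrable_rpow' (by linarith))
    refine h1.congr_fun (fun r hr => ?_) measurableSet_Ioc
    have hr0 : 0 < r := hr.1
    have hmin : min (r ^ 2) 1 = r ^ 2 := min_eq_left (by nlinarith [hr.2])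
    simp only [hmin, smul_eq_mul]
    rw [← Real.rpow_natCast r m, ← Real.rpow_natCast r 2, ← Real.rpow_sub hr0,
      ← Real.rpow_add hr0]
    congr 1; push_cast; ring
  · have h1 : IntegrableOn (fun r : ℝ => r ^ (-1 - σ)) (Set.Ioi 1) :=
      integrableOn_Ioi_rpow_of_lt (by linarith) one_pos
    refine h1.congr_fun (fun r hr => ?_) measurableSet_Ioi
    have hr1 : 1 < r := hr
    have hr0 : 0 < r := by linarith
    have hmin : min (r ^ 2) 1 = 1 := min_eq_right (by nlinarith)
    simp only [hmin, smul_eq_mul]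
    rw [← Real.rpow_natCast r m, one_div, ← Real.rpow_neg hr0.le, ← Real.rpow_add hr0]
    congr 1; push_cast; ring

/-- The two competing bounds on the increment of `sd φ · y`, for small and for large `y`, combined
at the critical radius `R`. -/
lemma abs_sd_increment_le {n : ℕ} {φ : EuclideanSpace ℝ (Fin n) → ℝ} {L₃ L₄ h R : ℝ}
    (hR : 0 < R) (hR2 : L₃ * R ^ 2 = L₄ * h) (hL₄ : 0 < L₄) (hh : 0 < h)
    (h₃ : ∀ x y, |sd φ x y| ≤ 2 * L₃ * ‖y‖ ^ 2)
    (h₄ : ∀ a b, |φ a - φ b| ≤ L₄ * ‖a - b‖)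
    (x e y : EuclideanSpace ℝ (Fin n)) (he : ‖e‖ = 1) :
    |sd φ (x + h • e) y - sd φ x y| ≤ 4 * (L₄ * h) * min (‖R⁻¹ • y‖ ^ 2) 1 := by
  have hn : ‖h • e‖ = h := by rw [norm_smul, he, mul_one, Real.norm_of_nonneg hh.le]
  rw [mul_min_of_nonneg _ _ (by positivity)]
  refine le_min ?_ ?_
  · have e1 : 4 * (L₄ * h) * ‖R⁻¹ • y‖ ^ 2 = 4 * L₃ * ‖y‖ ^ 2 := by
      rw [← hR2, norm_smul, Real.norm_of_nonneg (inv_nonneg.2 hR.le)]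
      field_simp
    rw [e1]
    have := abs_sub (sd φ (x + h • e) y) (sd φ x y)
    linarith [h₃ (x + h • e) y, h₃ x y]
  · have a1 := h₄ (x + h • e + y) (x + y)
    have a2 := h₄ (x + h • e - y) (x - y)
    have a3 := h₄ (x + h • e) x
    rw [show x + h • e + y - (x + y) = h • e by abel, hn, abs_le] at a1
    rw [show x + h • e - y - (x - y) = h • e by abel, hn, abs_le] at a2
    rw [show x + h • e - x = h • e by abel, hn, abs_le] at a3
    unfold sd
    rw [abs_le]
    constructor <;> linarith [a1.1, a1.2, a2.1, a2.2, a3.1, a3.2]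

theorem holder_estimate_for_phi_increment (n : ℕ) (σ : ℝ)
    (hσ : 1 < σ ∧ σ < 2) :
    ∃ C : ℝ, 0 < C ∧
      ∀ (φ : EuclideanSpace ℝ (Fin n) → ℝ) (L₃ L₄ : ℝ), 0 < L₃ → 0 < L₄ →
        (∀ x y, |sd φ x y| ≤ 2 * L₃ * ‖y‖ ^ 2) →
        (∀ a b, |φ a - φ b| ≤ L₄ * ‖a - b‖) →
        ∀ (x e : EuclideanSpace ℝ (Fin n)) (h : ℝ), ‖e‖ = 1 → 0 < h → h ≤ 1 →
          ∫ y, |sd φ (x + h • e) y - sd φ x y| / ‖y‖ ^ ((n : ℝ) + σ)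
            ≤ C * L₄ ^ ((2 - σ) / 2) * L₃ ^ (σ / 2) * h ^ ((2 - σ) / 2) := by
  have hK : 0 ≤ ∫ z, scaleKernel n σ z := integral_nonneg (scaleKernel_nonneg n σ)
  -- The summand `1` only serves to make the constant positive.
  refine ⟨4 * (∫ z, scaleKernel n σ z) + 1, by positivity, ?_⟩
  intro φ L₃ L₄ hL₃ hL₄ h₃ h₄ x e h he hh _
  obtain _ | m := n
  · -- There is no unit vector in dimension zero.
    simp [Subsingleton.elim e 0] at he
  set K := ∫ z, scaleKernel (m + 1) σ z
  set R := Real.sqrt (L₄ * h / L₃) with hRdef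
  have hR : 0 < R := Real.sqrt_pos.2 (by positivity)
  have hR2 : L₃ * R ^ 2 = L₄ * h := by
    rw [hRdef, Real.sq_sqrt (by positivity)]; field_simp
  have hint := (integrable_scaleKernel m σ hσ).comp_smul (inv_ne_zero hR.ne')
  set c := 4 * (L₄ * h) * (R ^ (((m + 1 : ℕ) : ℝ) + σ))⁻¹ with hc
  have hmono : ∫ y, |sd φ (x + h • e) y - sd φ x y| / ‖y‖ ^ (((m + 1 : ℕ) : ℝ) + σ)
      ≤ ∫ y, c * scaleKernel (m + 1) σ (R⁻¹ • y) := by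
    refine integral_mono_of_nonneg (Filter.Eventually.of_forall fun y => by positivity)
      (hint.const_mul c) (Filter.Eventually.of_forall fun y => ?_)
    have hb := abs_sd_increment_le hR hR2 hL₄ hh h₃ h₄ x e y he
    have e1 : c * scaleKernel (m + 1) σ (R⁻¹ • y) =
        4 * (L₄ * h) * min (‖R⁻¹ • y‖ ^ 2) 1 / ‖y‖ ^ (((m + 1 : ℕ) : ℝ) + σ) := by
      have e2 : ‖R⁻¹ • y‖ ^ (((m + 1 : ℕ) : ℝ) + σ) =
          (R ^ (((m + 1 : ℕ) : ℝ) + σ))⁻¹ * ‖y‖ ^ (((m + 1 : ℕ) : ℝ) + σ) := by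
        rw [norm_smul, Real.norm_of_nonneg (inv_nonneg.2 hR.le),
          Real.mul_rpow (inv_nonneg.2 hR.le) (norm_nonneg y), Real.inv_rpow hR.le]
      have hp : R ^ (((m + 1 : ℕ) : ℝ) + σ) ≠ 0 := (Real.rpow_pos_of_pos hR _).ne'
      rw [hc, scaleKernel, e2]
      generalize R ^ (((m + 1 : ℕ) : ℝ) + σ) = p at hp ⊢
      generalize ‖y‖ ^ (((m + 1 : ℕ) : ℝ) + σ) = q
      generalize min (‖R⁻¹ • y‖ ^ 2) 1 = s
      rw [div_eq_mul_inv, div_eq_mul_inv, mul_inv, inv_inv]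
      field_simp
    simp only [e1]
    gcongr
  have hscale : ∫ y, c * scaleKernel (m + 1) σ (R⁻¹ • y) = 4 * (L₄ * h) * R ^ (-σ) * K := by
    rw [integral_const_mul, Measure.integral_comp_inv_smul, finrank_euclideanSpace_fin,
      abs_of_pos (by positivity), smul_eq_mul, hc, Real.rpow_add hR, Real.rpow_natCast,
      Real.rpow_neg hR.le]
    have := (Real.rpow_pos_of_pos hR σ).ne'
    field_simp
    rfl
  have hpow : L₄ * h * R ^ (-σ) = L₄ ^ ((2 - σ) / 2) * L₃ ^ (σ / 2) * h ^ ((2 - σ) / 2) := by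
    rw [hRdef, Real.sqrt_eq_rpow, ← Real.rpow_mul (by positivity),
      Real.div_rpow (by positivity) hL₃.le, Real.mul_rpow hL₄.le hh.le,
      show (1 / 2 : ℝ) * -σ = -(σ / 2) by ring, Real.rpow_neg hL₃.le, div_inv_eq_mul,
      show (2 - σ) / 2 = 1 + -(σ / 2) by ring, Real.rpow_add hL₄, Real.rpow_add hh,
      Real.rpow_one, Real.rpow_one]
    ring
  calc _ ≤ 4 * (L₄ * h) * R ^ (-σ) * K := hmono.trans_eq hscale
    _ = 4 * K * (L₄ * h * R ^ (-σ)) := by ring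
    _ ≤ (4 * K + 1) * (L₄ * h * R ^ (-σ)) := by gcongr; linarith
    _ = _ := by rw [hpow]; ring
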